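/- Let a ∈ ℝ^N be a fixed nonzero vector, let P = P(a) be the M×M autocorrelation Toeplitz matrix of a, and let y ∈ ℝ^M be a zero-mean Gaussian random vector with covariance matrix P. Then for every ε ∈ (0,1), P( ‖y‖₂² ≥ M‖a‖₂² (1+ε) ) ≤ exp( − ε² M / (8 ρ(a)) ). -/

import Mathlib

open MeasureTheory Matrix Real Finset

/-- Un-normalized sample autocorrelation `R_a(τ) = ∑_{i=1}^{N-τ} a_i a_{i+τ}`. -/
noncomputable def autocorr (N : ℕ) (a : Fin N → ℝ) (τ : ℕ) : ℝ :=
  ∑ i : Fin N, if h : i.1 + τ < N then a i * a ⟨i.1 + τ, h⟩ else 0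

/-- The `M × M` symmetric Toeplitz covariance matrix `P(a)` with entries `R_a(|i-j|)`. -/
noncomputable def covToeplitz (N M : ℕ) (a : Fin N → ℝ) :
    Matrix (Fin M) (Fin M) ℝ :=
  fun i j => autocorr N a (Nat.dist i.1 j.1)

/-!
In an orthonormal eigenbasis of the covariance matrix the coordinates of `y` are independent
centred Gaussians with variances `λ_i`, so `‖y‖²` is a weighted sum of independent `χ²` variables
with mean `∑ λ_i = tr P = M ‖a‖²`. Chernoff's bound at `t = ε / (4 max λ_i)` gives the tail, because
`2 t λ_i ≤ 1 / 2` and `-log (1 - u) ≤ u + u²` for `0 ≤ u ≤ 1 / 2`.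

For `a ≠ 0` the matrix `P(a)` is nonsingular, so that `y` has a density: `P(a)` is the Gram matrix
of the linear map `v ↦ a * v` (convolution), which is injective because `ℝ[X]` is a domain.
-/

open ProbabilityTheory Polynomial
open scoped NNReal ENNReal

section WeightedChiSquare

lemma inv_sqrt_one_sub_le_exp {u : ℝ} (h0 : 0 ≤ u) (h1 : u ≤ 1 / 2) :
    (√(1 - u))⁻¹ ≤ exp ((u + u ^ 2) / 2) := by
  have hexp : exp (-(u + u ^ 2)) ≤ 1 - u := by
    have hquad : 1 + (u + u ^ 2) + (u + u ^ 2) ^ 2 / 2 ≤ exp (u + u ^ 2) :=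
      quadratic_le_exp_of_nonneg (by positivity)
    rw [exp_neg, inv_le_iff_one_le_mul₀ (exp_pos _)]
    nlinarith [mul_nonneg (sq_nonneg u) (sub_nonneg.2 h1), pow_nonneg h0 3, pow_nonneg h0 4]
  calc (√(1 - u))⁻¹ ≤ (exp (-(u + u ^ 2) / 2))⁻¹ := by
        rw [exp_half]; gcongr
    _ = exp ((u + u ^ 2) / 2) := by rw [← exp_neg]; ring_nf

lemma gaussianPDFReal_zero_mul_exp_mul_sq {v : ℝ≥0} (hv : v ≠ 0) (t x : ℝ) :
    gaussianPDFReal 0 v x * exp (t * x ^ 2) =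
      (√(2 * π * v))⁻¹ * exp (-((1 - 2 * t * v) / (2 * v)) * x ^ 2) := by
  rw [gaussianPDFReal, mul_assoc, ← exp_add]
  congr 2
  field_simp
  ring

lemma integrable_exp_mul_sq_gaussianReal {v : ℝ≥0} {t : ℝ} (ht : 2 * t * v < 1) :
    Integrable (fun x ↦ exp (t * x ^ 2)) (gaussianReal 0 v) := by
  rcases eq_or_ne v 0 with rfl | hv
  · simp [integrable_dirac]
  have hb : 0 < (1 - 2 * t * v) / (2 * v) := div_pos (by linarith) (by positivity)
  rw [gaussianReal_of_var_ne_zero 0 hv, integrable_withDensity_iff_integrable_smul'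
    (measurable_gaussianPDF 0 v) (ae_of_all _ fun _ ↦ gaussianPDF_lt_top)]
  simp only [toReal_gaussianPDF, smul_eq_mul, gaussianPDFReal_zero_mul_exp_mul_sq hv]
  exact (integrable_exp_neg_mul_sq hb).const_mul _

lemma mgf_sq_gaussianReal {v : ℝ≥0} {t : ℝ} (ht : 2 * t * v < 1) :
    mgf (fun x ↦ x ^ 2) (gaussianReal 0 v) t = (√(1 - 2 * t * v))⁻¹ := by
  rcases eq_or_ne v 0 with rfl | hv
  · simp [mgf]
  have hpos : 0 < 1 - 2 * t * v := by linarith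
  have hvar : (√(2 * π * v)) ≠ 0 := by positivity
  rw [mgf, integral_gaussianReal_eq_integral_smul hv]
  simp only [smul_eq_mul, gaussianPDFReal_zero_mul_exp_mul_sq hv]
  rw [integral_const_mul, integral_gaussian, div_div_eq_mul_div, ← mul_assoc, mul_comm π 2,
    sqrt_div' _ hpos.le, ← mul_div_assoc, inv_mul_cancel₀ hvar, one_div]

lemma mgf_sq_gaussianReal_le {v : ℝ≥0} {t : ℝ} (ht : 0 ≤ t) (htv : 4 * t * v ≤ 1) :
    mgf (fun x ↦ x ^ 2) (gaussianReal 0 v) t ≤ exp (t * v + 2 * t ^ 2 * v ^ 2) := by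
  rw [mgf_sq_gaussianReal (by linarith)]
  refine (inv_sqrt_one_sub_le_exp (by positivity) (by linarith)).trans_eq ?_
  ring_nf

variable {ι : Type*} [Fintype ι]

lemma pi_gaussianReal_sum_sq_ge_le_exp_mul_prod_mgf (v : ι → ℝ≥0) {t : ℝ} (ht : 0 ≤ t)
    (htv : ∀ i, 2 * t * v i < 1) (r : ℝ) :
    (Measure.pi fun i ↦ gaussianReal 0 (v i)).real {w | r ≤ ∑ i, w i ^ 2} ≤
      exp (-t * r) * ∏ i, mgf (fun x ↦ x ^ 2) (gaussianReal 0 (v i)) t := by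
  set μ := Measure.pi fun i ↦ gaussianReal 0 (v i)
  have hindep : iIndepFun (fun i (w : ι → ℝ) ↦ w i ^ 2) μ :=
    iIndepFun_pi (X := fun _ x ↦ x ^ 2) fun _ ↦ by fun_prop
  have hmeas (i : ι) : Measurable fun w : ι → ℝ ↦ w i ^ 2 := by fun_prop
  have hint : Integrable (fun w ↦ exp (t * (∑ i, fun w : ι → ℝ ↦ w i ^ 2) w)) μ :=
    hindep.integrable_exp_mul_sum hmeas fun i _ ↦
      integrable_comp_eval (μ := fun i ↦ gaussianReal 0 (v i))
        (integrable_exp_mul_sq_gaussianReal (htv i))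
  have hmgf (i : ι) :
      mgf (fun w : ι → ℝ ↦ w i ^ 2) μ t = mgf (fun x ↦ x ^ 2) (gaussianReal 0 (v i)) t :=
    integral_comp_eval (μ := fun i ↦ gaussianReal 0 (v i)) (f := fun x ↦ exp (t * x ^ 2))
      (by fun_prop)
  simpa only [hindep.mgf_sum hmeas, hmgf, Finset.sum_apply] using
    measure_ge_le_exp_mul_mgf r ht hint

theorem pi_gaussianReal_sum_sq_upper_tail {v : ι → ℝ≥0} {L ε : ℝ} (hL : 0 < L)
    (hvL : ∀ i, v i ≤ L) (hε₀ : 0 ≤ ε) (hε₁ : ε ≤ 1) :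
    (Measure.pi fun i ↦ gaussianReal 0 (v i)).real
        {w | (∑ i, (v i : ℝ)) * (1 + ε) ≤ ∑ i, w i ^ 2} ≤
      exp (-(ε ^ 2 * ∑ i, (v i : ℝ)) / (8 * L)) := by
  -- `t = ε / (4 L)` minimises the exponent `2 t² L T - t ε T`, where `T = ∑ i, v i`.
  set t := ε / (4 * L) with ht_def
  have ht : 0 ≤ t := by positivity
  have htv (i : ι) : 4 * t * v i ≤ 1 := calc
    4 * t * v i ≤ 4 * t * L := by gcongr; exact hvL i
    _ = ε := by rw [ht_def]; field_simp
    _ ≤ 1 := hε₁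
  calc _ ≤ exp (-t * ((∑ i, (v i : ℝ)) * (1 + ε))) *
        ∏ i, mgf (fun x ↦ x ^ 2) (gaussianReal 0 (v i)) t :=
      pi_gaussianReal_sum_sq_ge_le_exp_mul_prod_mgf v ht (fun i ↦ by linarith [htv i]) _
    _ ≤ exp (-t * ((∑ i, (v i : ℝ)) * (1 + ε))) * ∏ i, exp (t * v i + 2 * t ^ 2 * (L * v i)) := by
      gcongr with i
      · exact fun i _ ↦ mgf_nonneg
      · refine (mgf_sq_gaussianReal_le ht (htv i)).trans ?_
        rw [sq (v i : ℝ)]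
        gcongr
        exact hvL i
    _ = exp (-(ε ^ 2 * ∑ i, (v i : ℝ)) / (8 * L)) := by
      rw [← exp_sum, ← exp_add, sum_add_distrib, ← mul_sum, ← mul_sum, ← mul_sum, ht_def]
      congr 1
      field_simp
      ring

end WeightedChiSquare

lemma pi_withDensity_ofReal {ι : Type*} [Fintype ι] {E : ι → Type*}
    {mE : ∀ i, MeasurableSpace (E i)} {μ : ∀ i, Measure (E i)} [∀ i, SigmaFinite (μ i)]
    {f : ∀ i, E i → ℝ} (hf : ∀ i, Integrable (f i) (μ i)) (hf₀ : ∀ i x, 0 ≤ f i x) :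
    Measure.pi (fun i ↦ (μ i).withDensity fun x ↦ ENNReal.ofReal (f i x)) =
      (Measure.pi μ).withDensity fun x ↦ ENNReal.ofReal (∏ i, f i (x i)) := by
  have (i : ι) : IsFiniteMeasure ((μ i).withDensity fun x ↦ ENNReal.ofReal (f i x)) :=
    isFiniteMeasure_withDensity_ofReal (hf i).2
  refine Measure.pi_eq fun s hs ↦ ?_
  have hint : Integrable (fun x ↦ ∏ i, f i (x i)) (Measure.pi fun i ↦ (μ i).restrict (s i)) :=
    .fintype_prod_dep fun i ↦ (hf i).restrict
  calc (Measure.pi μ).withDensity (fun x ↦ ENNReal.ofReal (∏ i, f i (x i))) (Set.univ.pi s)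
      = ENNReal.ofReal (∏ i, ∫ x in s i, f i x ∂μ i) := by
        rw [withDensity_apply _ (.univ_pi hs), Measure.restrict_pi_pi,
          ← ofReal_integral_eq_lintegral_ofReal hint (ae_of_all _ fun x ↦
            Finset.prod_nonneg fun i _ ↦ hf₀ i (x i)), integral_fintype_prod_eq_prod]
    _ = ∏ i, (μ i).withDensity (fun x ↦ ENNReal.ofReal (f i x)) (s i) := by
        rw [ENNReal.ofReal_prod_of_nonneg fun i _ ↦ integral_nonneg (hf₀ i)]
        refine Finset.prod_congr rfl fun i _ ↦ ?_
        rw [withDensity_apply _ (hs i), ofReal_integral_eq_lintegral_ofReal (hf i).restrict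
          (ae_of_all _ (hf₀ i))]

lemma map_withDensity_comp {α β : Type*} {mα : MeasurableSpace α} {mβ : MeasurableSpace β}
    {μ : Measure α} {ν : Measure β} {g : α → β} (hg : MeasurePreserving g μ ν) {f : β → ℝ≥0∞}
    (hf : Measurable f) : (μ.withDensity (f ∘ g)).map g = ν.withDensity f := by
  ext s hs
  rw [Measure.map_apply hg.measurable hs, withDensity_apply _ (hg.measurable hs),
    withDensity_apply _ hs]
  exact hg.setLIntegral_comp_preimage hs hf

section MultivariateGaussian

variable {ι : Type*} [Fintype ι] [DecidableEq ι]

lemma measurePreserving_unitaryGroup_mulVec (U : unitaryGroup ι ℝ) :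
    MeasurePreserving (fun w ↦ (U : Matrix ι ι ℝ) *ᵥ w) volume volume := by
  have hdet : |(U : Matrix ι ι ℝ).det| = 1 := by
    have hsq : (U : Matrix ι ι ℝ).det * (U : Matrix ι ι ℝ).det = 1 := (det_of_mem_unitary U.2).1
    rcases mul_self_eq_one_iff.1 hsq with h | h <;> rw [h] <;> simp
  refine ⟨by fun_prop, ?_⟩
  change volume.map (toLin' (U : Matrix ι ι ℝ)) = volume
  rw [Real.map_matrix_volume_pi_eq_smul_volume_pi fun h ↦ by simp [h] at hdet, abs_inv, hdet]
  simp

lemma unitaryGroup_mulVec_dotProduct_mulVec (U : unitaryGroup ι ℝ) (w z : ι → ℝ) :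
    ((U : Matrix ι ι ℝ) *ᵥ w) ⬝ᵥ z = w ⬝ᵥ (star (U : Matrix ι ι ℝ) *ᵥ z) := by
  rw [star_eq_conjTranspose, conjTranspose_eq_transpose_of_trivial, mulVec_transpose,
    dotProduct_comm, dotProduct_mulVec, dotProduct_comm]

lemma sum_sq_unitaryGroup_mulVec (U : unitaryGroup ι ℝ) (w : ι → ℝ) :
    ∑ i, ((U : Matrix ι ι ℝ) *ᵥ w) i ^ 2 = ∑ i, w i ^ 2 := by
  have := unitaryGroup_mulVec_dotProduct_mulVec U w ((U : Matrix ι ι ℝ) *ᵥ w)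
  rw [mulVec_mulVec, Unitary.coe_star_mul_self, one_mulVec] at this
  simpa only [dotProduct, ← sq] using this

variable {S : Matrix ι ι ℝ}

lemma star_eigenvectorUnitary_mul_inv_mul (hS : S.PosDef) :
    star (hS.1.eigenvectorUnitary : Matrix ι ι ℝ) * S⁻¹ * hS.1.eigenvectorUnitary =
      diagonal fun i ↦ (hS.1.eigenvalues i)⁻¹ := by
  set U := hS.1.eigenvectorUnitary
  have hdiag : star (U : Matrix ι ι ℝ) * S * U = diagonal hS.1.eigenvalues := by
    simpa using hS.1.conjStarAlgAut_star_eigenvectorUnitary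
  have hU : star (U : Matrix ι ι ℝ) = (U : Matrix ι ι ℝ)⁻¹ :=
    (inv_eq_left_inv (Unitary.coe_star_mul_self U)).symm
  have hinv : (diagonal hS.1.eigenvalues)⁻¹ = diagonal fun i ↦ (hS.1.eigenvalues i)⁻¹ := by
    refine inv_eq_right_inv ?_
    simp [diagonal_mul_diagonal, (hS.eigenvalues_pos _).ne']
  have hU' : (U : Matrix ι ι ℝ) = (star (U : Matrix ι ι ℝ))⁻¹ :=
    (inv_eq_right_inv (Unitary.coe_star_mul_self U)).symm
  rw [← hinv, ← hdiag, Matrix.mul_inv_rev, Matrix.mul_inv_rev, ← hU', ← hU, Matrix.mul_assoc]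

lemma eigenvectorUnitary_mulVec_dotProduct_inv (hS : S.PosDef) (w : ι → ℝ) :
    (hS.1.eigenvectorUnitary *ᵥ w) ⬝ᵥ S⁻¹ *ᵥ (hS.1.eigenvectorUnitary *ᵥ w) =
      ∑ i, w i ^ 2 / hS.1.eigenvalues i := by
  rw [unitaryGroup_mulVec_dotProduct_mulVec, mulVec_mulVec, mulVec_mulVec,
    star_eigenvectorUnitary_mul_inv_mul hS]
  simp only [dotProduct, mulVec_diagonal]
  exact Finset.sum_congr rfl fun i _ ↦ by ring

/-- The density, with respect to Lebesgue measure, of the centred Gaussian distribution with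
covariance matrix `S`. It is meaningful only for positive definite `S`. -/
noncomputable def centeredGaussianPDFReal (S : Matrix ι ι ℝ) (v : ι → ℝ) : ℝ :=
  (√((2 * π) ^ Fintype.card ι * S.det))⁻¹ * exp (-(1 / 2) * (v ⬝ᵥ S⁻¹ *ᵥ v))

/-- The centred Gaussian distribution on `ι → ℝ` with positive definite covariance matrix `S`,
given by its Lebesgue density. -/
noncomputable def centeredGaussian (S : Matrix ι ι ℝ) : Measure (ι → ℝ) :=
  volume.withDensity fun v ↦ ENNReal.ofReal (centeredGaussianPDFReal S v)

lemma measurable_centeredGaussianPDFReal (S : Matrix ι ι ℝ) :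
    Measurable (centeredGaussianPDFReal S) := by
  unfold centeredGaussianPDFReal dotProduct mulVec dotProduct
  fun_prop

lemma centeredGaussianPDFReal_eigenvectorUnitary_mulVec (hS : S.PosDef) (w : ι → ℝ) :
    centeredGaussianPDFReal S (hS.1.eigenvectorUnitary *ᵥ w) =
      ∏ i, gaussianPDFReal 0 (hS.1.eigenvalues i).toNNReal (w i) := by
  have hcoe (i : ι) : ((hS.1.eigenvalues i).toNNReal : ℝ) = hS.1.eigenvalues i :=
    coe_toNNReal _ (hS.eigenvalues_pos i).le
  have hdet : (2 * π) ^ Fintype.card ι * S.det = ∏ i, 2 * π * hS.1.eigenvalues i := by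
    rw [hS.1.det_eq_prod_eigenvalues, prod_mul_distrib, prod_const, card_univ]
    rfl
  have hsqrt : √(∏ i, 2 * π * hS.1.eigenvalues i) = ∏ i, √(2 * π * hS.1.eigenvalues i) :=
    sqrt_prod _ fun i _ ↦ by have := hS.eigenvalues_pos i; positivity
  simp only [gaussianPDFReal, hcoe, sub_zero]
  rw [centeredGaussianPDFReal, eigenvectorUnitary_mulVec_dotProduct_inv hS, hdet, hsqrt,
    prod_mul_distrib, prod_inv_distrib, ← exp_sum, mul_sum]
  congr! 3 with i
  ring

theorem map_pi_gaussianReal_eigenvectorUnitary_mulVec (hS : S.PosDef) :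
    (Measure.pi fun i ↦ gaussianReal 0 (hS.1.eigenvalues i).toNNReal).map
      (fun w ↦ (hS.1.eigenvectorUnitary : Matrix ι ι ℝ) *ᵥ w) = centeredGaussian S := by
  have hpi : (Measure.pi fun i ↦ gaussianReal 0 (hS.1.eigenvalues i).toNNReal) =
      volume.withDensity fun w ↦
        ENNReal.ofReal (centeredGaussianPDFReal S (hS.1.eigenvectorUnitary *ᵥ w)) := by
    have hne (i : ι) : (hS.1.eigenvalues i).toNNReal ≠ 0 :=
      (toNNReal_pos.2 (hS.eigenvalues_pos i)).ne'
    simp only [centeredGaussianPDFReal_eigenvectorUnitary_mulVec hS,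
      gaussianReal_of_var_ne_zero 0 (hne _)]
    exact pi_withDensity_ofReal (fun i ↦ integrable_gaussianPDFReal _ _)
      fun i ↦ gaussianPDFReal_nonneg _ _
  rw [hpi]
  exact map_withDensity_comp (measurePreserving_unitaryGroup_mulVec hS.1.eigenvectorUnitary)
    (f := fun v ↦ ENNReal.ofReal (centeredGaussianPDFReal S v))
    (measurable_centeredGaussianPDFReal S).ennreal_ofReal

theorem centeredGaussian_sum_sq_upper_tail (hS : S.PosDef) {L ε : ℝ} (hL : 0 < L)
    (hSL : ∀ i, hS.1.eigenvalues i ≤ L) (hε₀ : 0 ≤ ε) (hε₁ : ε ≤ 1) :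
    centeredGaussian S {v | S.trace * (1 + ε) ≤ ∑ i, v i ^ 2} ≤
      ENNReal.ofReal (exp (-(ε ^ 2 * S.trace) / (8 * L))) := by
  have hcoe (i : ι) : ((hS.1.eigenvalues i).toNNReal : ℝ) = hS.1.eigenvalues i :=
    coe_toNNReal _ (hS.eigenvalues_pos i).le
  have htrace : S.trace = ∑ i, ((hS.1.eigenvalues i).toNNReal : ℝ) := by
    simpa only [hcoe, RCLike.ofReal_real_eq_id, id] using hS.1.trace_eq_sum_eigenvalues
  rw [← map_pi_gaussianReal_eigenvectorUnitary_mulVec hS, Measure.map_apply (by fun_prop)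
    (measurableSet_le measurable_const (by fun_prop)), Set.preimage_ofPred_eq]
  simp only [sum_sq_unitaryGroup_mulVec, htrace]
  rw [← ofReal_measureReal]
  exact ENNReal.ofReal_le_ofReal
    (pi_gaussianReal_sum_sq_upper_tail hL (fun i ↦ (hcoe i).trans_le (hSL i)) hε₀ hε₁)

end MultivariateGaussian

section AutocorrelationMatrix

variable {N : ℕ}

/-- The matrix of `v ↦ a * v`, the convolution of finite sequences, in terms of coefficients of
polynomials: column `i` is the sequence `a` delayed by `i` steps and padded with zeros. -/
noncomputable def convMatrix (M : ℕ) (a : Fin N → ℝ) : Matrix (Fin (N + M)) (Fin M) ℝ :=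
  of fun n i ↦ (ofFn N a * X ^ (i : ℕ)).coeff n

lemma convMatrix_mulVec (M : ℕ) (a : Fin N → ℝ) (v : Fin M → ℝ) (n : Fin (N + M)) :
    (convMatrix M a *ᵥ v) n = (ofFn N a * ofFn M v).coeff n := by
  rw [mulVec, dotProduct, ofFn_eq_sum_monomial v, Finset.mul_sum, finsetSum_coeff]
  refine sum_congr rfl fun i _ ↦ ?_
  rw [← C_mul_X_pow_eq_monomial, mul_left_comm, coeff_C_mul, mul_comm]
  rfl

lemma coeff_ofFn_mul_ofFn_of_le {M : ℕ} (a : Fin N → ℝ) (v : Fin M → ℝ) {n : ℕ}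
    (hn : N + M ≤ n) : (ofFn N a * ofFn M v).coeff n = 0 := by
  rw [coeff_mul]
  refine Finset.sum_eq_zero fun ⟨k, l⟩ hkl ↦ ?_
  have hkl : k + l = n := HasAntidiagonal.mem_antidiagonal.1 hkl
  dsimp only
  rcases le_or_gt N k with hk | hk
  · rw [ofFn_coeff_eq_zero_of_ge a hk, zero_mul]
  · rw [ofFn_coeff_eq_zero_of_ge v (by lia), mul_zero]

lemma injective_convMatrix_mulVec (M : ℕ) {a : Fin N → ℝ} (ha : a ≠ 0) :
    Function.Injective (convMatrix M a).mulVec := by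
  refine (injective_iff_map_eq_zero (convMatrix M a).mulVecLin).2 fun v hv ↦ ?_
  have hprod : ofFn N a * ofFn M v = 0 := by
    ext n
    rcases lt_or_ge n (N + M) with hn | hn
    · rw [← convMatrix_mulVec M a v ⟨n, hn⟩]
      exact congrFun hv _
    · exact coeff_ofFn_mul_ofFn_of_le a v hn
  have ha' : ofFn N a ≠ 0 := (map_ne_zero_iff _ (injective_ofFn N)).2 ha
  exact (map_eq_zero_iff _ (injective_ofFn M)).1 ((mul_eq_zero.1 hprod).resolve_left ha')

lemma autocorr_eq_sum_coeff (a : Fin N → ℝ) (τ : ℕ) :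
    autocorr N a τ = ∑ k ∈ range N, (ofFn N a).coeff k * (ofFn N a).coeff (k + τ) := by
  rw [autocorr, Finset.sum_range]
  refine sum_congr rfl fun k _ ↦ ?_
  split_ifs with h
  · simp [h]
  · simp [not_lt.1 h]

lemma sum_convMatrix_mul_convMatrix {M : ℕ} (a : Fin N → ℝ) {i j : Fin M} (hij : i ≤ j) :
    ∑ n, convMatrix M a n i * convMatrix M a n j = autocorr N a (j - i) := by
  set p := ofFn N a
  obtain ⟨τ, hτ⟩ := Nat.exists_eq_add_of_le (Fin.le_def.1 hij)
  have hM : N + M = j + (N + (M - j)) := by lia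
  calc ∑ n, convMatrix M a n i * convMatrix M a n j
      = ∑ n ∈ range (j + (N + (M - j))),
          (p * X ^ (i : ℕ)).coeff n * (p * X ^ (j : ℕ)).coeff n := by
        rw [← hM, Finset.sum_range]; rfl
    _ = ∑ k ∈ range (N + (M - j)), p.coeff (k + τ) * p.coeff k := by
        rw [sum_range_add, sum_eq_zero, zero_add]
        · refine sum_congr rfl fun k _ ↦ ?_
          rw [add_comm _ k, coeff_mul_X_pow, hτ, add_comm (i : ℕ), ← add_assoc, coeff_mul_X_pow]
        · intro n hn
          rw [coeff_mul_X_pow' p j, if_neg (by simpa using hn), mul_zero]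
    _ = ∑ k ∈ range N, p.coeff (k + τ) * p.coeff k := by
        rw [sum_range_add, add_eq_left]
        refine sum_eq_zero fun k _ ↦ ?_
        rw [ofFn_coeff_eq_zero_of_ge a (Nat.le_add_right N k), mul_zero]
    _ = autocorr N a (j - i) := by
        rw [autocorr_eq_sum_coeff, hτ, Nat.add_sub_cancel_left]
        exact sum_congr rfl fun k _ ↦ mul_comm _ _

lemma covToeplitz_eq_gram (M : ℕ) (a : Fin N → ℝ) :
    covToeplitz N M a = (convMatrix M a)ᴴ * convMatrix M a := by
  ext i j
  simp only [covToeplitz, mul_apply, conjTranspose_apply, star_trivial]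
  rcases le_total i j with h | h
  · rw [sum_convMatrix_mul_convMatrix a h, Nat.dist_eq_sub_of_le h]
  · simp_rw [mul_comm (convMatrix M a _ i)]
    rw [sum_convMatrix_mul_convMatrix a h, Nat.dist_eq_sub_of_le_right h]

lemma posDef_covToeplitz (M : ℕ) {a : Fin N → ℝ} (ha : a ≠ 0) : (covToeplitz N M a).PosDef := by
  rw [covToeplitz_eq_gram]
  exact .conjTranspose_mul_self _ (injective_convMatrix_mulVec M ha)

lemma trace_covToeplitz (M : ℕ) (a : Fin N → ℝ) :
    (covToeplitz N M a).trace = M * ∑ i, a i ^ 2 := by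
  simp [Matrix.trace, covToeplitz, autocorr, sq]

end AutocorrelationMatrix

theorem gaussian_toeplitz_upper_tail (N M : ℕ) (hN : 1 ≤ N) (hM : 1 ≤ M)
    (a : Fin N → ℝ) (ha : a ≠ 0)
    (hP : (covToeplitz N M a).IsHermitian)
    (ν : Measure (Fin M → ℝ))
    (hν : ν = volume.withDensity (fun v => ENNReal.ofReal
      ((Real.sqrt ((2 * π) ^ M * (covToeplitz N M a).det))⁻¹ *
        Real.exp (-(1 / 2) * (v ⬝ᵥ (covToeplitz N M a)⁻¹ *ᵥ v))))) :
    ∀ ε ∈ Set.Ioo (0 : ℝ) 1,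
      ν {v | ∑ k, (v k) ^ 2 ≥ M * (∑ i, (a i) ^ 2) * (1 + ε)} ≤
        ENNReal.ofReal (Real.exp (-(ε ^ 2 * M) /
          (8 * ((⨆ i, hP.eigenvalues i) / ∑ i, (a i) ^ 2)))) := by
  rintro ε ⟨hε₀, hε₁⟩
  have hPD : (covToeplitz N M a).PosDef := posDef_covToeplitz M ha
  have hle_iSup (i : Fin M) : hP.eigenvalues i ≤ ⨆ i, hP.eigenvalues i :=
    le_ciSup (Set.finite_range _).bddAbove i
  have hiSup : 0 < ⨆ i, hP.eigenvalues i := (hPD.eigenvalues_pos ⟨0, hM⟩).trans_le (hle_iSup _)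
  have hν_gaussian : ν = centeredGaussian (covToeplitz N M a) := by
    simp only [hν, centeredGaussian, centeredGaussianPDFReal, Fintype.card_fin]
  have hexponent : -(ε ^ 2 * M) / (8 * ((⨆ i, hP.eigenvalues i) / ∑ i, a i ^ 2)) =
      -(ε ^ 2 * (covToeplitz N M a).trace) / (8 * ⨆ i, hP.eigenvalues i) := by
    rw [trace_covToeplitz, mul_div_assoc', div_div_eq_mul_div, neg_mul, mul_assoc]
  rw [hν_gaussian, hexponent, ← trace_covToeplitz]
  exact centeredGaussian_sum_sq_upper_tail hPD hiSup hle_iSup hε₀.le hε₁.le
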